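/- Let a, b, c be integers with a ≥ b−1, a ≥ c−1, b ≥ c−1 and c ≥ 1. Then in ℚ(q,t): F₃(a,b,c) = F₃(a+2, b+2, c−2) + (qt)^c · F₂(a+c, b−c) + (qt)^{c−1} · F₂(a+c, b−c+2) + ∑_{j=2}^{min(a−b, 2c)} (qt)^{b+j} · F₁(a−b+2c−2j) − ∑_{j=a−b+1}^{1} (qt)^{b+j} · F₁(a−b+2c−2j), where a sum over an empty range of integers is zero. -/

import Mathlib

open Finset

noncomputable section

/-- The field `ℚ(q,t)` of rational functions in two variables over `ℚ`. -/
abbrev K : Type := FractionRing (MvPolynomial (Fin 2) ℚ)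

/-- The variable `q` in `ℚ(q,t)`. -/
def q : K := algebraMap (MvPolynomial (Fin 2) ℚ) K (MvPolynomial.X 0)

/-- The variable `t` in `ℚ(q,t)`. -/
def t : K := algebraMap (MvPolynomial (Fin 2) ℚ) K (MvPolynomial.X 1)

/-- `H₂(a,b)` as a function of the two variables `x`, `y` (so that interchanging the
arguments interchanges `q` and `t`):
`H₂(a,b;x,y) = x^{a+2b}/(1 − y/x²) + x^a y^b/(1 − x²/y)`. -/
def H₂ (a b : ℤ) (x y : K) : K :=
  x ^ (a + 2 * b) / (1 - y / x ^ 2) + x ^ a * y ^ b / (1 - x ^ 2 / y)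

/-- `H₃(a,b,c;x,y)`, the head-like standard-tableau expansion for `n = 4`. -/
def H₃ (a b c : ℤ) (x y : K) : K :=
  x ^ (a + 2 * b + 3 * c) / ((1 - y / x ^ 2) * (1 - y / x ^ 3))
    + x ^ (a + 2 * b) * y ^ c / ((1 - y / x ^ 2) * (1 - x ^ 3 / y))
    + x ^ (a + 2 * c) * y ^ b * (1 - y) / ((1 - y ^ 2 / x ^ 2) * (1 - x ^ 2 / y) * (1 - y / x))
    + x ^ a * y ^ (b + 2 * c) / ((1 - x ^ 2 / y ^ 2) * (1 - x / y))
    + x ^ (a + c) * y ^ (b + c) * (1 - x) / ((1 - x ^ 2 / y) * (1 - x / y) * (1 - y / x))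

/-- `F₁(m) = (q^{m+1} − t^{m+1})/(q − t)`, the function `F(a)` of the paper. -/
def F₁ (m : ℤ) : K := (q ^ (m + 1) - t ^ (m + 1)) / (q - t)

/-- `F₂(a,b) = H₂(a,b;q,t)/(1 − t/q) + H₂(a,b;t,q)/(1 − q/t)`. -/
def F₂ (a b : ℤ) : K := H₂ a b q t / (1 - t / q) + H₂ a b t q / (1 - q / t)

/-- `F₃(a,b,c) = H₃(a,b,c;q,t)/(1 − t/q) + H₃(a,b,c;t,q)/(1 − q/t)`. -/
def F₃ (a b c : ℤ) : K := H₃ a b c q t / (1 - t / q) + H₃ a b c t q / (1 - q / t)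

/-! Replacing `(a, b, c)` by `(a + 2, b + 2, c - 2)` fixes the first and last summands of `H₃` and
multiplies the other three by `(x³/y)²`, `(y/x)²` and `(x/y)²`. In the differences a denominator
factor cancels, and what survives is two multiples of `H₂` plus `M / (1 - y/x) + M' / (1 - x/y)` for
two monomials `M`, `M'`: by the geometric series, the sum of the monomials
`x^(a + 2c - j) y^(b + j)`, `2 ≤ j ≤ 2c`. Since `F₁ m` is the symmetrization of `x^m`, symmetrizing
these in `q` and `t` gives the terms `(qt)^(b + j) F₁(a - b + 2c - 2j)`.

Such a term is antisymmetric under `j ↦ a - b + 1 + 2c - j`, so the sum from `a - b + 1` to `2c`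
vanishes, which is why the range `[2, 2c]` may be cut at `a - b`.
-/

section FieldIdentities

variable {F : Type*} [Field F] {x y : F}

/-- Brion's formula for a lattice segment: each endpoint contributes its monomial, divided by one
minus the ratio of the next monomial to it. -/
lemma sum_Icc_zpow_sub_mul_zpow_add (hx : x ≠ 0) (hy : y ≠ 0) (hxy : x ≠ y) (i k : ℤ) {u v : ℤ}
    (huv : u ≤ v + 1) :
    ∑ j ∈ Icc u v, x ^ (i - j) * y ^ (k + j)
      = x ^ (i - u) * y ^ (k + u) / (1 - y / x) + x ^ (i - v) * y ^ (k + v) / (1 - x / y) := by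
  have hxy_sub : x - y ≠ 0 := sub_ne_zero.2 hxy
  have hyx_sub : y - x ≠ 0 := sub_ne_zero.2 hxy.symm
  obtain ⟨v, rfl⟩ : ∃ w, v = w - 1 := ⟨v + 1, by ring⟩
  rw [sub_add_cancel] at huv
  induction v, huv using Int.leInduction with
  | base =>
    rw [Icc_eq_empty (by lia), sum_empty, show i - (u - 1) = i - u + 1 by ring, ← add_sub_assoc,
      zpow_add_one₀ hx, zpow_sub_one₀ hy]
    field_simp
    ring
  | succ v huv ih =>
    rw [add_sub_cancel_right, ← insert_Icc_sub_one_right_eq_Icc huv, sum_insert (by simp), ih,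
      show i - (v - 1) = i - v + 1 by ring, ← add_sub_assoc, zpow_add_one₀ hx, zpow_sub_one₀ hy]
    field_simp
    ring

lemma H₃_summand₂_shift (hx : x ≠ 0) (hy : y ≠ 0) (h21 : x ^ 2 ≠ y) (h31 : x ^ 3 ≠ y)
    (i j : ℤ) :
    x ^ i * y ^ j / ((1 - y / x ^ 2) * (1 - x ^ 3 / y))
      = x ^ (i + 6) * y ^ (j - 2) / ((1 - y / x ^ 2) * (1 - x ^ 3 / y))
        + x ^ i * y ^ j / (1 - y / x ^ 2) + x ^ (i + 3) * y ^ (j - 1) / (1 - y / x ^ 2) := by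
  have h21_sub : x ^ 2 - y ≠ 0 := sub_ne_zero.2 h21
  have h31_sub : y - x ^ 3 ≠ 0 := sub_ne_zero.2 h31.symm
  rw [zpow_add₀ hx, zpow_add₀ hx, zpow_sub₀ hy, zpow_sub₀ hy]
  generalize x ^ i = X
  generalize y ^ j = Y
  norm_cast
  field_simp
  ring

lemma H₃_summand₃_shift (hx : x ≠ 0) (hy : y ≠ 0) (h21 : x ^ 2 ≠ y) (h22 : x ^ 2 ≠ y ^ 2)
    (i j : ℤ) :
    x ^ i * y ^ j * (1 - y) / ((1 - y ^ 2 / x ^ 2) * (1 - x ^ 2 / y) * (1 - y / x))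
      = x ^ (i - 2) * y ^ (j + 2) * (1 - y)
            / ((1 - y ^ 2 / x ^ 2) * (1 - x ^ 2 / y) * (1 - y / x))
        + x ^ i * y ^ j / (1 - x ^ 2 / y) + x ^ (i - 1) * y ^ (j + 1) / (1 - x ^ 2 / y)
        + x ^ (i - 2) * y ^ (j + 2) / (1 - y / x) := by
  have h21_sub : y - x ^ 2 ≠ 0 := sub_ne_zero.2 h21.symm
  have h22_sub : x ^ 2 - y ^ 2 ≠ 0 := sub_ne_zero.2 h22
  have h11_sub : x - y ≠ 0 := sub_ne_zero.2 (ne_of_apply_ne (· ^ 2) h22)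
  rw [zpow_sub₀ hx, zpow_sub₀ hx, zpow_add₀ hy, zpow_add₀ hy]
  generalize x ^ i = X
  generalize y ^ j = Y
  norm_cast
  field_simp
  ring

lemma H₃_summand₄_shift (hx : x ≠ 0) (hy : y ≠ 0) (h22 : x ^ 2 ≠ y ^ 2) (i j : ℤ) :
    x ^ i * y ^ j / ((1 - x ^ 2 / y ^ 2) * (1 - x / y))
      = x ^ (i + 2) * y ^ (j - 2) / ((1 - x ^ 2 / y ^ 2) * (1 - x / y))
        + x ^ i * y ^ j / (1 - x / y) := by
  have h22_sub : y ^ 2 - x ^ 2 ≠ 0 := sub_ne_zero.2 h22.symm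
  have h11_sub : y - x ≠ 0 := sub_ne_zero.2 (ne_of_apply_ne (· ^ 2) h22.symm)
  rw [zpow_add₀ hx, zpow_sub₀ hy]
  generalize x ^ i = X
  generalize y ^ j = Y
  norm_cast
  field_simp
  ring

end FieldIdentities

lemma sum_Icc_consecutive {M : Type*} [AddCommMonoid M] (f : ℤ → M) {u v w : ℤ} (huv : u ≤ v + 1)
    (hvw : v ≤ w) :
    ∑ j ∈ Icc u v, f j + ∑ j ∈ Icc (v + 1) w, f j = ∑ j ∈ Icc u w, f j := by
  rw [← sum_union (disjoint_left.2 fun j => by simp only [mem_Icc]; lia)]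
  congr 1
  ext j
  simp only [mem_union, mem_Icc]
  lia

lemma sum_Icc_eq_zero_of_antisymm {M : Type*} [AddCommGroup M] [IsAddTorsionFree M] {f : ℤ → M}
    {u v : ℤ} (hf : ∀ j, f (u + v - j) = -f j) : ∑ j ∈ Icc u v, f j = 0 := by
  refine sum_involution (fun j _ => u + v - j) (fun j _ => by rw [hf, add_neg_cancel])
    (fun j _ hj hfix => hj (self_eq_neg.1 ?_)) (fun j => by simp only [mem_Icc]; lia)
    (fun j _ => by lia)
  rw [← hf, hfix]

lemma sum_Icc_eq_sum_Icc_min_sub_of_antisymm {M : Type*} [AddCommGroup M] [IsAddTorsionFree M]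
    {f : ℤ → M} {k l n : ℤ} (hf : ∀ j, f (k + 1 + n - j) = -f j) (hln : l ≤ n + 1) :
    ∑ j ∈ Icc l n, f j = ∑ j ∈ Icc l (min k n), f j - ∑ j ∈ Icc (k + 1) (l - 1), f j := by
  rcases le_total l (k + 1) with hlk | hkl
  · rw [Icc_eq_empty (a := k + 1) (by lia), sum_empty, sub_zero]
    rcases le_total k n with hkn | hnk
    · rw [min_eq_left hkn, ← sum_Icc_consecutive f hlk hkn, sum_Icc_eq_zero_of_antisymm hf,
        add_zero]
    · rw [min_eq_right hnk]
  · have hsplit := sum_Icc_consecutive f (u := k + 1) (v := l - 1) (w := n) (by lia) (by lia)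
    rw [sub_add_cancel, sum_Icc_eq_zero_of_antisymm hf] at hsplit
    rw [Icc_eq_empty (b := min k n) (by lia), sum_empty, zero_sub]
    exact eq_neg_of_add_eq_zero_right hsplit

lemma q_ne_zero : q ≠ 0 := by simp [q]

lemma t_ne_zero : t ≠ 0 := by simp [t]

lemma q_pow_ne_t_pow {m n : ℕ} (hm : m ≠ 0) : q ^ m ≠ t ^ n := by
  rw [q, t, ← map_pow, ← map_pow]
  intro h
  have heval := congrArg (MvPolynomial.eval ![0, 1])
    (IsFractionRing.injective (MvPolynomial (Fin 2) ℚ) K h)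
  simp [hm] at heval

lemma q_pow_ne_t {m : ℕ} (hm : m ≠ 0) : q ^ m ≠ t := by
  simpa using q_pow_ne_t_pow (n := 1) hm

lemma t_pow_ne_q (n : ℕ) : t ^ n ≠ q := by
  simpa using (q_pow_ne_t_pow (n := n) one_ne_zero).symm

lemma q_ne_t : q ≠ t := by
  simpa using q_pow_ne_t one_ne_zero

lemma mul_zpow_mul_H₂ {x y : K} (hx : x ≠ 0) (hy : y ≠ 0) (a b n : ℤ) :
    (x * y) ^ n * H₂ a b x y
      = x ^ (a + 2 * b + n) * y ^ n / (1 - y / x ^ 2)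
        + x ^ (a + n) * y ^ (b + n) / (1 - x ^ 2 / y) := by
  rw [H₂, mul_zpow, zpow_add₀ hx (a + 2 * b), zpow_add₀ hx a n, zpow_add₀ hy]
  ring

lemma H₃_two_step_recursion {x y : K} (hx : x ≠ 0) (hy : y ≠ 0) (h22 : x ^ 2 ≠ y ^ 2)
    (h21 : x ^ 2 ≠ y) (h31 : x ^ 3 ≠ y) (a b c : ℤ) :
    H₃ a b c x y
      = H₃ (a + 2) (b + 2) (c - 2) x y
        + (x * y) ^ c * H₂ (a + c) (b - c) x y
        + (x * y) ^ (c - 1) * H₂ (a + c) (b - c + 2) x y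
        + (x ^ (a + 2 * c - 2) * y ^ (b + 2) / (1 - y / x)
          + x ^ a * y ^ (b + 2 * c) / (1 - x / y)) := by
  have h₂ := H₃_summand₂_shift hx hy h21 h31 (a + 2 * b) c
  have h₃ := H₃_summand₃_shift hx hy h21 h22 (a + 2 * c) b
  have h₄ := H₃_summand₄_shift hx hy h22 a (b + 2 * c)
  rw [H₃, H₃, mul_zpow_mul_H₂ hx hy, mul_zpow_mul_H₂ hx hy,
    show a + 2 + 2 * (b + 2) + 3 * (c - 2) = a + 2 * b + 3 * c by ring,
    show a + 2 + 2 * (b + 2) = a + 2 * b + 6 by ring,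
    show a + 2 + 2 * (c - 2) = a + 2 * c - 2 by ring,
    show b + 2 + 2 * (c - 2) = b + 2 * c - 2 by ring,
    show a + 2 + (c - 2) = a + c by ring,
    show b + 2 + (c - 2) = b + c by ring,
    show a + c + 2 * (b - c) + c = a + 2 * b by ring,
    show a + c + c = a + 2 * c by ring,
    show b - c + c = b by ring,
    show a + c + 2 * (b - c + 2) + (c - 1) = a + 2 * b + 3 by ring,
    show a + c + (c - 1) = a + 2 * c - 1 by ring,
    show b - c + 2 + (c - 1) = b + 1 by ring]
  linear_combination h₂ + h₃ + h₄

lemma F₁_neg_sub_two (m : ℤ) : (q * t) ^ (m + 1) * F₁ (-m - 2) = -F₁ m := by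
  rw [F₁, F₁, show -m - 2 + 1 = -(m + 1) by ring, zpow_neg, zpow_neg, mul_zpow]
  have hq := zpow_ne_zero (m + 1) q_ne_zero
  have ht := zpow_ne_zero (m + 1) t_ne_zero
  field_simp
  ring

lemma symmetrized_monomial_eq_F₁ (i j : ℤ) :
    q ^ i * t ^ j / (1 - t / q) + t ^ i * q ^ j / (1 - q / t) = (q * t) ^ j * F₁ (i - j) := by
  have hq := q_ne_zero
  have ht := t_ne_zero
  have hqt : q - t ≠ 0 := sub_ne_zero.2 q_ne_t
  have htq : t - q ≠ 0 := sub_ne_zero.2 q_ne_t.symm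
  rw [F₁, mul_zpow, zpow_add_one₀ hq, zpow_add_one₀ ht, zpow_sub₀ hq, zpow_sub₀ ht]
  field_simp
  ring

lemma F₃_eq_add_sum_Icc (a b : ℤ) {c : ℤ} (hc : 1 ≤ c) :
    F₃ a b c
      = F₃ (a + 2) (b + 2) (c - 2)
        + (q * t) ^ c * F₂ (a + c) (b - c)
        + (q * t) ^ (c - 1) * F₂ (a + c) (b - c + 2)
        + ∑ j ∈ Icc (2 : ℤ) (2 * c), (q * t) ^ (b + j) * F₁ (a - b + 2 * c - 2 * j) := by
  have hsum : ∑ j ∈ Icc (2 : ℤ) (2 * c), (q * t) ^ (b + j) * F₁ (a - b + 2 * c - 2 * j)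
      = (∑ j ∈ Icc (2 : ℤ) (2 * c), q ^ (a + 2 * c - j) * t ^ (b + j)) / (1 - t / q)
        + (∑ j ∈ Icc (2 : ℤ) (2 * c), t ^ (a + 2 * c - j) * q ^ (b + j)) / (1 - q / t) := by
    rw [sum_div, sum_div, ← sum_add_distrib]
    refine sum_congr rfl fun j _ => ?_
    rw [symmetrized_monomial_eq_F₁]
    congr 2
    ring
  have h22 : q ^ 2 ≠ t ^ 2 := q_pow_ne_t_pow two_ne_zero
  rw [hsum, sum_Icc_zpow_sub_mul_zpow_add q_ne_zero t_ne_zero q_ne_t _ _ (by lia),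
    sum_Icc_zpow_sub_mul_zpow_add t_ne_zero q_ne_zero q_ne_t.symm _ _ (by lia), F₃, F₃, F₂, F₂,
    H₃_two_step_recursion q_ne_zero t_ne_zero h22 (q_pow_ne_t two_ne_zero)
      (q_pow_ne_t three_ne_zero),
    H₃_two_step_recursion t_ne_zero q_ne_zero h22.symm (t_pow_ne_q 2) (t_pow_ne_q 3),
    add_sub_cancel_right, mul_comm t q]
  ring

theorem F₃_two_step_recursion_general (a b c : ℤ) (hc : 1 ≤ c) :
    F₃ a b c
      = F₃ (a + 2) (b + 2) (c - 2)
        + (q * t) ^ c * F₂ (a + c) (b - c)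
        + (q * t) ^ (c - 1) * F₂ (a + c) (b - c + 2)
        + (∑ j ∈ Icc (2 : ℤ) (min (a - b) (2 * c)),
            (q * t) ^ (b + j) * F₁ (a - b + 2 * c - 2 * j))
        - ∑ j ∈ Icc (a - b + 1) (1 : ℤ), (q * t) ^ (b + j) * F₁ (a - b + 2 * c - 2 * j) := by
  have hantisymm : ∀ j, (q * t) ^ (b + (a - b + 1 + 2 * c - j))
        * F₁ (a - b + 2 * c - 2 * (a - b + 1 + 2 * c - j))
      = -((q * t) ^ (b + j) * F₁ (a - b + 2 * c - 2 * j)) := fun j => by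
    rw [← mul_neg, ← F₁_neg_sub_two, ← mul_assoc,
      ← zpow_add₀ (mul_ne_zero q_ne_zero t_ne_zero)]
    congr 2 <;> ring
  rw [F₃_eq_add_sum_Icc a b hc, sum_Icc_eq_sum_Icc_min_sub_of_antisymm hantisymm (by lia),
    add_sub_assoc, show (2 : ℤ) - 1 = 1 from rfl]

theorem F₃_two_step_recursion (a b c : ℤ)
    (hab : b - 1 ≤ a) (hac : c - 1 ≤ a) (hbc : c - 1 ≤ b) (hc : 1 ≤ c) :
    F₃ a b c
      = F₃ (a + 2) (b + 2) (c - 2)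
        + (q * t) ^ c * F₂ (a + c) (b - c)
        + (q * t) ^ (c - 1) * F₂ (a + c) (b - c + 2)
        + (∑ j ∈ Finset.Icc (2 : ℤ) (min (a - b) (2 * c)),
            (q * t) ^ (b + j) * F₁ (a - b + 2 * c - 2 * j))
        - ∑ j ∈ Finset.Icc (a - b + 1) (1 : ℤ),
            (q * t) ^ (b + j) * F₁ (a - b + 2 * c - 2 * j) :=
  F₃_two_step_recursion_general a b c hc
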